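/- Let G be a directed graph and x an edge of G. The following are equivalent: (1) there is no directed cycle in G containing x; (2) there is an integer n ≥ 1 such that x^n ∈ I(G); (3) the Krull dimension of ℤ[x]/(I(G) ∩ ℤ[x]) equals 1; (4) the Krull dimension of ℚ[x]/(I_ℚ(G) ∩ ℚ[x]) equals 0. Moreover, there is a directed cycle in G containing x if and only if the Krull dimension of ℚ[x]/(I_ℚ(G) ∩ ℚ[x]) equals 1. -/

import Mathlib

open MvPolynomial

/-- The `l`-th elementary symmetric polynomial in the finite set `s` of variables
(`1` for `l = 0`, `0` for `l > |s|`). -/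
noncomputable def esymmOf (R : Type) [CommRing R] {E : Type} (s : Finset E) (l : ℕ) :
    MvPolynomial E R :=
  ∑ t ∈ s.powersetCard l, ∏ x ∈ t, X x

/-- The incidence ideal of the directed graph with edge-endpoint maps `src`, `tgt`:
the ideal generated by the incidence relations
`δ_{v,l} = e_l(edges out of v) - e_l(edges into v)` for all vertices `v` and all `l ≥ 1`
(for `l > k_v` the relation `δ_{v,l}` is the zero polynomial, so this ideal is generated by
the `δ_{v,l}` with `1 ≤ l ≤ k_v`). -/
noncomputable def incidenceIdeal (R : Type) [CommRing R] {V E : Type}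
    [Fintype E] [DecidableEq V] (src tgt : E → V) : Ideal (MvPolynomial E R) :=
  Ideal.span {f | ∃ (v : V) (l : ℕ), 1 ≤ l ∧
    f = esymmOf R (Finset.univ.filter fun x => src x = v) l
      - esymmOf R (Finset.univ.filter fun x => tgt x = v) l}

/-- A directed cycle in the directed graph with edge-endpoint maps `src`, `tgt`:
pairwise distinct vertices `v_0, …, v_n` and edges `x_0, …, x_n` with `x_i` going
from `v_i` to `v_{i+1}` (indices mod `n+1`). -/
structure DirCycle {V E : Type} (src tgt : E → V) where
  n : ℕ
  vtx : ZMod (n + 1) → V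
  edge : ZMod (n + 1) → E
  vtx_inj : Function.Injective vtx
  edge_src : ∀ i, src (edge i) = vtx i
  edge_tgt : ∀ i, tgt (edge i) = vtx (i + 1)

/-- `C` is the set of edges of a directed cycle.  (A directed cycle, considered up to
cyclic permutation, is uniquely determined by its set of edges.) -/
def IsCycle {V E : Type} (src tgt : E → V) (C : Set E) : Prop :=
  ∃ c : DirCycle src tgt, C = Set.range c.edge

/-!
Level sets carry the argument. If `f` is a zero of `I(G)` with values in a domain, then at every
vertex the outgoing and the incoming values have the same elementary symmetric functions, hence are
the same multiset up to zeros. So for `a ≠ 0` the edges `e` with `f e = a` leave each vertex as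
often as they enter it, and every such edge lies on a directed cycle. Applied to the quotients by
the primes containing `I(G)`, this shows that `x` is nilpotent modulo `I(G)` when no cycle contains
`x`.

Conversely, giving the edges of a cycle one common value `t` and all other edges the value `0`
yields a zero of `I(G)`; with `t` an indeterminate, this excludes any relation on a single edge of
the cycle.
-/

section Esymm

variable {A : Type*}

lemma esymm_cons_succ [CommSemiring A] (a : A) (s : Multiset A) (l : ℕ) :
    (a ::ₘ s).esymm (l + 1) = s.esymm (l + 1) + a * s.esymm l := by
  simp [Multiset.esymm, Multiset.sum_map_mul_left]

lemma esymm_filter_ne_zero [CommSemiring A] [DecidableEq A] (s : Multiset A) (l : ℕ) :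
    (s.filter (· ≠ 0)).esymm l = s.esymm l := by
  induction s using Multiset.induction_on generalizing l with
  | empty => rfl
  | cons a s ih =>
    cases l with
    | zero => simp [Multiset.esymm]
    | succ l =>
      by_cases ha : a = 0
      · simp [ha, ih, esymm_cons_succ]
      · simp [ha, ih, esymm_cons_succ]

variable [CommRing A] [IsDomain A]

lemma eq_of_card_eq_of_esymm_eq {s t : Multiset A} (hcard : s.card = t.card)
    (h : ∀ l, s.esymm l = t.esymm l) : s = t := by
  rw [← Polynomial.roots_multiset_prod_X_sub_C s, ← Polynomial.roots_multiset_prod_X_sub_C t,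
    Multiset.prod_X_sub_X_eq_sum_esymm, Multiset.prod_X_sub_X_eq_sum_esymm, hcard]
  simp only [h]

lemma filter_ne_zero_eq_of_esymm_eq [DecidableEq A] {s t : Multiset A}
    (h : ∀ l, s.esymm l = t.esymm l) : s.filter (· ≠ 0) = t.filter (· ≠ 0) := by
  have filter_pad (s : Multiset A) (m : ℕ) :
      (s + Multiset.replicate m 0).filter (· ≠ 0) = s.filter (· ≠ 0) := by
    simp [Multiset.filter_add, Multiset.filter_eq_nil, Multiset.mem_replicate]
  have padded_eq : s + Multiset.replicate t.card 0 = t + Multiset.replicate s.card 0 := by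
    refine eq_of_card_eq_of_esymm_eq (by simp [add_comm]) fun l => ?_
    rw [← esymm_filter_ne_zero, filter_pad, esymm_filter_ne_zero, h, ← esymm_filter_ne_zero t,
      ← filter_pad t s.card, esymm_filter_ne_zero]
  rw [← filter_pad s t.card, padded_eq, filter_pad]

end Esymm

section Walks

/-- A walk from `a` to `b` along `r` that visits no vertex twice: its vertices are
`p 0 = a, …, p n = b`, and the values `p i` with `i > n` are irrelevant. -/
def IsSimpleWalk {V : Type*} (r : V → V → Prop) (a b : V) (n : ℕ) (p : ℕ → V) : Prop :=
  p 0 = a ∧ p n = b ∧ Set.InjOn p (Set.Iic n) ∧ ∀ i < n, r (p i) (p (i + 1))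

variable {V : Type*} {r : V → V → Prop} {a b c : V} {n : ℕ} {p : ℕ → V}

lemma IsSimpleWalk.take (hp : IsSimpleWalk r a b n p) {j : ℕ} (hj : j ≤ n) :
    IsSimpleWalk r a (p j) j p :=
  ⟨hp.1, rfl, hp.2.2.1.mono (Set.Iic_subset_Iic.mpr hj), fun i hi => hp.2.2.2 i (by omega)⟩

lemma IsSimpleWalk.extend (hp : IsSimpleWalk r a b n p) (hbc : r b c)
    (hc : ∀ j ≤ n, p j ≠ c) :
    IsSimpleWalk r a c (n + 1) (Function.update p (n + 1) c) := by
  obtain ⟨hp0, hpn, hinj, hstep⟩ := hp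
  have old {i : ℕ} (hi : i ≤ n) : Function.update p (n + 1) c i = p i :=
    Function.update_of_ne (by omega) _ _
  refine ⟨(old n.zero_le).trans hp0, Function.update_self .., ?_, fun i hi => ?_⟩
  · intro i hi j hj hij
    rcases Nat.le_succ_iff.mp hi with hi | rfl <;> rcases Nat.le_succ_iff.mp hj with hj | rfl
    · exact hinj hi hj (by rwa [old hi, old hj] at hij)
    · exact absurd (by simpa [old hi] using hij) (hc i hi)
    · exact absurd (by simpa [old hj] using hij.symm) (hc j hj)
    · rfl
  · rcases Nat.lt_succ_iff_lt_or_eq.mp hi with hi | rfl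
    · rw [old hi.le, old hi]
      exact hstep i hi
    · rwa [old le_rfl, hpn, Function.update_self]

lemma exists_isSimpleWalk_of_reflTransGen (h : Relation.ReflTransGen r a b) :
    ∃ n p, IsSimpleWalk r a b n p := by
  induction h with
  | refl => exact ⟨0, fun _ => a, rfl, rfl, by simp [Set.InjOn], by simp⟩
  | @tail b c _ hbc ih =>
    obtain ⟨n, p, hp⟩ := ih
    by_cases hc : ∃ j ≤ n, p j = c
    · obtain ⟨j, hj, rfl⟩ := hc
      exact ⟨j, p, hp.take hj⟩
    · exact ⟨n + 1, _, hp.extend hbc fun j hj hjc => hc ⟨j, hj, hjc⟩⟩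

end Walks

section Cycles

variable {V E : Type} {src tgt : E → V} {x : E}

variable (src tgt) in
/-- The vertex `v` is the terminal vertex of some edge with initial vertex `u`; walks in the graph
are walks along this relation. -/
def HasEdge (u v : V) : Prop :=
  ∃ e, src e = u ∧ tgt e = v

variable (src tgt) in
/-- The edge `x` lies on some directed cycle. -/
def LiesOnCycle (x : E) : Prop :=
  ∃ C : Set E, IsCycle src tgt C ∧ x ∈ C

variable (src tgt) in
/-- A finite set of edges is balanced if each vertex is the initial vertex of as many of its edges
as it is the terminal vertex of, that is, if the multisets of the initial and of the terminal
vertices of its edges agree. -/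
def IsBalanced (S : Finset E) : Prop :=
  S.val.map src = S.val.map tgt

lemma liesOnCycle_of_isSimpleWalk {n : ℕ} {p : ℕ → V}
    (hp : IsSimpleWalk (HasEdge src tgt) (tgt x) (src x) n p) :
    LiesOnCycle src tgt x := by
  obtain ⟨hp0, hpn, hinj, hstep⟩ := hp
  have exists_edge (i : Fin (n + 1)) : ∃ e, src e = p i ∧ tgt e = p (i + 1 : Fin (n + 1)) ∧
      (i = Fin.last n → e = x) := by
    induction i using Fin.lastCases with
    | last => exact ⟨x, by simp [hpn], by simp [hp0], fun _ => rfl⟩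
    | cast i =>
      obtain ⟨e, hsrc, htgt⟩ := hstep i i.isLt
      refine ⟨e, hsrc, by simpa using htgt, fun h => absurd h i.castSucc_ne_last⟩
  choose edge hsrc htgt hlast using exists_edge
  have vtx_inj : Function.Injective fun i : Fin (n + 1) => p i := fun i j hij =>
    Fin.ext (hinj i.is_le j.is_le hij)
  exact ⟨_, ⟨⟨n, fun i : Fin (n + 1) => p i, edge, vtx_inj, hsrc, htgt⟩, rfl⟩,
    Fin.last n, hlast _ rfl⟩

lemma IsBalanced.card_filter_eq {S : Finset E} (hS : IsBalanced src tgt S) (P : V → Prop)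
    [DecidablePred P] :
    (S.filter fun e => P (src e)).card = (S.filter fun e => P (tgt e)).card := by
  simpa [Finset.card, Multiset.countP_map] using congrArg (Multiset.countP P) hS

lemma isBalanced_of_card_filter_eq [DecidableEq V] {S : Finset E}
    (h : ∀ v, (S.filter fun e => src e = v).card = (S.filter fun e => tgt e = v).card) :
    IsBalanced src tgt S :=
  Multiset.ext.mpr fun v => by simpa [Finset.card, Multiset.count_map, eq_comm (a := v)] using h v

variable (src tgt) in
lemma isBalanced_empty : IsBalanced src tgt ∅ :=
  rfl

/- Every edge of `S` that starts at a vertex reachable from `tgt x` also ends at one. By balance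
there are equally many edges of both kinds, so the converse holds too, and `x` ends at `tgt x`. -/
lemma IsBalanced.liesOnCycle {S : Finset E} (hS : IsBalanced src tgt S) (hx : x ∈ S) :
    LiesOnCycle src tgt x := by
  classical
  let Reachable := Relation.ReflTransGen (HasEdge src tgt) (tgt x)
  have src_subset_tgt :
      (S.filter fun e => Reachable (src e)) ⊆ S.filter fun e => Reachable (tgt e) :=
    Finset.monotone_filter_right S fun e _ he => he.tail ⟨e, rfl, rfl⟩
  have src_eq_tgt := Finset.eq_of_subset_of_card_le src_subset_tgt (hS.card_filter_eq Reachable).ge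
  have hx_src : x ∈ S.filter fun e => Reachable (src e) :=
    src_eq_tgt ▸ Finset.mem_filter.mpr ⟨hx, Relation.ReflTransGen.refl⟩
  obtain ⟨n, p, hp⟩ := exists_isSimpleWalk_of_reflTransGen (Finset.mem_filter.mp hx_src).2
  exact liesOnCycle_of_isSimpleWalk hp

lemma DirCycle.edge_injective (c : DirCycle src tgt) : Function.Injective c.edge := fun i j hij =>
  c.vtx_inj (by rw [← c.edge_src, ← c.edge_src, hij])

lemma DirCycle.isBalanced (c : DirCycle src tgt) :
    IsBalanced src tgt (Finset.univ.map ⟨c.edge, c.edge_injective⟩) := by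
  have shift : (Finset.univ.val.map fun i => c.vtx (i + 1)) = Finset.univ.val.map c.vtx := by
    conv_rhs => rw [← Multiset.map_univ_val_equiv (Equiv.addRight (1 : ZMod (c.n + 1)))]
    simp
  simp [IsBalanced, c.edge_src, c.edge_tgt, shift]

lemma LiesOnCycle.exists_isBalanced (h : LiesOnCycle src tgt x) :
    ∃ S : Finset E, IsBalanced src tgt S ∧ x ∈ S := by
  obtain ⟨_, ⟨c, rfl⟩, hx⟩ := h
  exact ⟨_, c.isBalanced, by simpa using hx⟩

end Cycles

section Zeros

lemma count_map_filter_eq_card_filter {α β γ : Type*} [DecidableEq β] [DecidableEq γ]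
    (s : Finset α) (f : α → β) (g : α → γ) (b : β) (c : γ) :
    ((s.filter (g · = c)).val.map f).count b = ((s.filter (f · = b)).filter (g · = c)).card := by
  rw [Multiset.count_map, ← Finset.filter_val, Finset.card_val, Finset.filter_comm]
  simp only [eq_comm (a := b)]

variable {V E R : Type} {A : Type*} [CommRing R] [CommRing A] [Algebra R A]

lemma map_esymmOf (φ : MvPolynomial E R →ₐ[R] A) (s : Finset E) (l : ℕ) :
    φ (esymmOf R s l) = (s.val.map fun e => φ (X e)).esymm l := by
  simp [esymmOf, Finset.esymm_map_val]

variable [Fintype E] [DecidableEq V] {src tgt : E → V}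

lemma incidenceIdeal_le_ker_iff (φ : MvPolynomial E R →ₐ[R] A) :
    incidenceIdeal R src tgt ≤ RingHom.ker φ ↔ ∀ v l,
      ((Finset.univ.filter (src · = v)).val.map fun e => φ (X e)).esymm l =
        ((Finset.univ.filter (tgt · = v)).val.map fun e => φ (X e)).esymm l := by
  simp only [← map_esymmOf]
  rw [incidenceIdeal, Ideal.span_le]
  refine ⟨fun h v l => ?_, ?_⟩
  · rcases l.eq_zero_or_pos with rfl | hl
    · simp [esymmOf]
    · have hmem : _ ∈ RingHom.ker φ := h ⟨v, l, hl, rfl⟩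
      rwa [RingHom.mem_ker, map_sub, sub_eq_zero] at hmem
  · rintro h _ ⟨v, l, -, rfl⟩
    rw [SetLike.mem_coe, RingHom.mem_ker, map_sub, h, sub_self]

lemma incidenceIdeal_le_ker_of_isBalanced [DecidableEq A] {φ : MvPolynomial E R →ₐ[R] A}
    (h : ∀ a ≠ 0, IsBalanced src tgt (Finset.univ.filter fun e => φ (X e) = a)) :
    incidenceIdeal R src tgt ≤ RingHom.ker φ := by
  refine (incidenceIdeal_le_ker_iff φ).mpr fun v l => ?_
  rw [← esymm_filter_ne_zero, ← esymm_filter_ne_zero (Multiset.map _ _)]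
  congr 1
  ext a
  by_cases ha : a = 0
  · simp [ha]
  · rw [Multiset.count_filter_of_pos (p := (· ≠ 0)) ha,
      Multiset.count_filter_of_pos (p := (· ≠ 0)) ha, count_map_filter_eq_card_filter,
      count_map_filter_eq_card_filter, (h a ha).card_filter_eq (· = v)]

lemma isBalanced_of_incidenceIdeal_le_ker [IsDomain A] [DecidableEq A]
    {φ : MvPolynomial E R →ₐ[R] A} (h : incidenceIdeal R src tgt ≤ RingHom.ker φ) {a : A}
    (ha : a ≠ 0) : IsBalanced src tgt (Finset.univ.filter fun e => φ (X e) = a) := by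
  refine isBalanced_of_card_filter_eq fun v => ?_
  have hfilter := filter_ne_zero_eq_of_esymm_eq ((incidenceIdeal_le_ker_iff φ).mp h v)
  rw [← count_map_filter_eq_card_filter, ← count_map_filter_eq_card_filter,
    ← Multiset.count_filter_of_pos (p := (· ≠ 0)) ha, hfilter,
    Multiset.count_filter_of_pos (p := (· ≠ 0)) ha]

lemma IsBalanced.incidenceIdeal_le_ker [DecidableEq E] {S : Finset E} (hS : IsBalanced src tgt S)
    (a : A) :
    incidenceIdeal R src tgt ≤ RingHom.ker (aeval (R := R) fun e => if e ∈ S then a else 0) := by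
  classical
  refine incidenceIdeal_le_ker_of_isBalanced fun b hb => ?_
  by_cases hab : a = b
  · convert hS using 1
    ext e
    simp [hab, hb.symm]
  · convert isBalanced_empty src tgt using 1
    ext e
    simp [ite_eq_iff, hab, hb.symm]

lemma X_mem_radical_incidenceIdeal {x : E} (hx : ¬ LiesOnCycle src tgt x) :
    (X x : MvPolynomial E R) ∈ (incidenceIdeal R src tgt).radical := by
  classical
  rw [Ideal.radical_eq_sInf, Submodule.mem_sInf]
  rintro P ⟨hIP, hP⟩
  by_contra hxP
  let φ := Ideal.Quotient.mkₐ R P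
  have hker : incidenceIdeal R src tgt ≤ RingHom.ker φ := fun p hp =>
    Ideal.Quotient.eq_zero_iff_mem.mpr (hIP hp)
  have hφx : φ (X x) ≠ 0 := by
    simpa [φ, Ideal.Quotient.eq_zero_iff_mem] using hxP
  exact hx ((isBalanced_of_incidenceIdeal_le_ker hker hφx).liesOnCycle (by simp))

end Zeros

section Elimination

variable {V E : Type} [Fintype E] [DecidableEq V] (R : Type) [CommRing R] (src tgt : E → V) (x : E)

/-- The ideal `I(G) ∩ R[x]` of `R[x]`, for an edge `x`, as an ideal of univariate polynomials. -/
noncomputable def elimIdeal : Ideal (Polynomial R) :=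
  Ideal.comap (Polynomial.aeval (R := R) (X x : MvPolynomial E R)).toRingHom
    (incidenceIdeal R src tgt)

variable {R src tgt x}

lemma X_pow_mem_elimIdeal_iff {n : ℕ} :
    Polynomial.X ^ n ∈ elimIdeal R src tgt x ↔
      (X x : MvPolynomial E R) ^ n ∈ incidenceIdeal R src tgt := by
  simp [elimIdeal]

lemma IsBalanced.aeval_eq_zero_of_mem_elimIdeal {A : Type*} [CommRing A] [Algebra R A]
    [DecidableEq E] {S : Finset E} (hS : IsBalanced src tgt S) {p : Polynomial R}
    (hp : p ∈ elimIdeal R src tgt x) (a : A) :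
    Polynomial.aeval (if x ∈ S then a else 0) p = 0 := by
  have h : aeval (fun e => if e ∈ S then a else 0)
      (Polynomial.aeval (X x : MvPolynomial E R) p) = 0 :=
    hS.incidenceIdeal_le_ker a hp
  rwa [← Polynomial.aeval_algHom_apply, aeval_X] at h

lemma LiesOnCycle.elimIdeal_eq_bot (h : LiesOnCycle src tgt x) : elimIdeal R src tgt x = ⊥ := by
  classical
  obtain ⟨S, hS, hx⟩ := h.exists_isBalanced
  refine eq_bot_iff.mpr fun p hp => ?_
  simpa [hx] using hS.aeval_eq_zero_of_mem_elimIdeal hp (Polynomial.X : Polynomial R)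

lemma elimIdeal_le_span_X : elimIdeal R src tgt x ≤ Ideal.span {Polynomial.X} := by
  classical
  intro p hp
  rw [Ideal.mem_span_singleton, Polynomial.X_dvd_iff, Polynomial.coeff_zero_eq_aeval_zero]
  simpa using (isBalanced_empty src tgt).aeval_eq_zero_of_mem_elimIdeal hp (0 : R)

theorem exists_X_pow_mem_incidenceIdeal_iff [Nontrivial R] :
    (∃ n : ℕ, 1 ≤ n ∧ (X x : MvPolynomial E R) ^ n ∈ incidenceIdeal R src tgt) ↔
      ¬ LiesOnCycle src tgt x := by
  refine ⟨?_, fun hx => ?_⟩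
  · rintro ⟨n, -, hn⟩ hx
    rw [← X_pow_mem_elimIdeal_iff, hx.elimIdeal_eq_bot, Ideal.mem_bot] at hn
    exact (Polynomial.monic_X_pow n).ne_zero hn
  · obtain ⟨n, hn⟩ := X_mem_radical_incidenceIdeal (R := R) hx
    exact ⟨n + 1, n.succ_pos, Ideal.pow_mem_of_pow_mem _ hn n.le_succ⟩

end Elimination

section KrullDimension

lemma ringKrullDim_quotient_eq_of_le_of_le_radical {B : Type*} [CommRing B] {I J : Ideal B}
    (hIJ : I ≤ J) (hJI : J ≤ I.radical) : ringKrullDim (B ⧸ I) = ringKrullDim (B ⧸ J) := by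
  have hzero : PrimeSpectrum.zeroLocus (I : Set B) = PrimeSpectrum.zeroLocus (J : Set B) :=
    (PrimeSpectrum.zeroLocus_anti_mono hIJ).antisymm' <| by
      rw [← PrimeSpectrum.zeroLocus_radical I]
      exact PrimeSpectrum.zeroLocus_anti_mono hJI
  rw [ringKrullDim_quotient, hzero, ← ringKrullDim_quotient]

lemma ringKrullDim_lt_ringKrullDim_polynomial {R : Type*} [CommRing R] [FiniteRingKrullDim R] :
    ringKrullDim R < ringKrullDim (Polynomial R) := by
  refine lt_of_lt_of_le ?_ ringKrullDim_succ_le_ringKrullDim_polynomial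
  obtain ⟨d, hd⟩ := WithBot.ne_bot_iff_exists.mp (ringKrullDim_ne_bot (R := R))
  lift d to ℕ using fun h => ringKrullDim_ne_top (R := R) (by rw [← hd, h]; rfl)
  rw [← hd]
  exact_mod_cast d.lt_succ_self

variable {V E : Type} [Fintype E] [DecidableEq V] {R : Type} [CommRing R] {src tgt : E → V} {x : E}

lemma LiesOnCycle.ringKrullDim_quotient_elimIdeal (h : LiesOnCycle src tgt x) :
    ringKrullDim (Polynomial R ⧸ elimIdeal R src tgt x) = ringKrullDim (Polynomial R) := by
  rw [h.elimIdeal_eq_bot]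
  exact ringKrullDim_eq_of_ringEquiv (RingEquiv.quotientBot (Polynomial R))

lemma ringKrullDim_quotient_elimIdeal_of_not_liesOnCycle (h : ¬ LiesOnCycle src tgt x) :
    ringKrullDim (Polynomial R ⧸ elimIdeal R src tgt x) = ringKrullDim R := by
  obtain ⟨n, hn⟩ := X_mem_radical_incidenceIdeal (R := R) h
  have hX : Ideal.span {Polynomial.X} ≤ (elimIdeal R src tgt x).radical :=
    (Ideal.span_singleton_le_iff_mem _).mpr ⟨n, X_pow_mem_elimIdeal_iff.mpr hn⟩
  rw [ringKrullDim_quotient_eq_of_le_of_le_radical elimIdeal_le_span_X hX]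
  have e := Polynomial.quotientSpanXSubCAlgEquiv (0 : R)
  rw [map_zero, sub_zero] at e
  exact ringKrullDim_eq_of_ringEquiv e.toRingEquiv

theorem ringKrullDim_quotient_elimIdeal_eq_iff [FiniteRingKrullDim R] :
    ringKrullDim (Polynomial R ⧸ elimIdeal R src tgt x) = ringKrullDim R ↔
      ¬ LiesOnCycle src tgt x := by
  refine ⟨fun hdim hx => ?_, ringKrullDim_quotient_elimIdeal_of_not_liesOnCycle⟩
  rw [hx.ringKrullDim_quotient_elimIdeal] at hdim
  exact ringKrullDim_lt_ringKrullDim_polynomial.ne' hdim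

theorem liesOnCycle_iff_ringKrullDim_quotient_elimIdeal_eq [FiniteRingKrullDim R] :
    LiesOnCycle src tgt x ↔
      ringKrullDim (Polynomial R ⧸ elimIdeal R src tgt x) = ringKrullDim (Polynomial R) := by
  refine ⟨fun hx => hx.ringKrullDim_quotient_elimIdeal, fun hdim => ?_⟩
  by_contra hx
  rw [ringKrullDim_quotient_elimIdeal_of_not_liesOnCycle hx] at hdim
  exact ringKrullDim_lt_ringKrullDim_polynomial.ne hdim

end KrullDimension

lemma ringKrullDim_int : ringKrullDim ℤ = 1 :=
  IsPrincipalIdealRing.ringKrullDim_eq_one ℤ Int.not_isField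

instance : FiniteRingKrullDim ℤ :=
  finiteRingKrullDim_iff_ne_bot_and_top.mpr (by rw [ringKrullDim_int]; decide)

theorem stmt12_general {V E : Type} [Fintype E] [DecidableEq V] (R S : Type)
    [CommRing R] [FiniteRingKrullDim R] [CommRing S] [FiniteRingKrullDim S]
    (src tgt : E → V) (x : E) :
    List.TFAE
      [¬ LiesOnCycle src tgt x,
       ∃ n : ℕ, 1 ≤ n ∧ (X x : MvPolynomial E R) ^ n ∈ incidenceIdeal R src tgt,
       ringKrullDim (Polynomial R ⧸ elimIdeal R src tgt x) = ringKrullDim R,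
       ringKrullDim (Polynomial S ⧸ elimIdeal S src tgt x) = ringKrullDim S] ∧
    (LiesOnCycle src tgt x ↔
      ringKrullDim (Polynomial S ⧸ elimIdeal S src tgt x) = ringKrullDim (Polynomial S)) := by
  have := Nontrivial.of_finiteRingKrullDim (R := R)
  refine ⟨?_, liesOnCycle_iff_ringKrullDim_quotient_elimIdeal_eq⟩
  tfae_have 2 ↔ 1 := exists_X_pow_mem_incidenceIdeal_iff
  tfae_have 3 ↔ 1 := ringKrullDim_quotient_elimIdeal_eq_iff
  tfae_have 4 ↔ 1 := ringKrullDim_quotient_elimIdeal_eq_iff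
  tfae_finish

theorem stmt12 {V E : Type} [Fintype V] [Fintype E] [DecidableEq V] [DecidableEq E]
    (src tgt : E → V) (x : E) :
    List.TFAE
      [¬ ∃ C : Set E, IsCycle src tgt C ∧ x ∈ C,
       ∃ n : ℕ, 1 ≤ n ∧ (X x : MvPolynomial E ℤ) ^ n ∈ incidenceIdeal ℤ src tgt,
       ringKrullDim
         (Polynomial ℤ ⧸
           Ideal.comap (Polynomial.aeval (R := ℤ) (X x : MvPolynomial E ℤ)).toRingHom
             (incidenceIdeal ℤ src tgt)) = 1,
       ringKrullDim
         (Polynomial ℚ ⧸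
           Ideal.comap (Polynomial.aeval (R := ℚ) (X x : MvPolynomial E ℚ)).toRingHom
             (incidenceIdeal ℚ src tgt)) = 0] ∧
    ((∃ C : Set E, IsCycle src tgt C ∧ x ∈ C) ↔
      ringKrullDim
        (Polynomial ℚ ⧸
          Ideal.comap (Polynomial.aeval (R := ℚ) (X x : MvPolynomial E ℚ)).toRingHom
            (incidenceIdeal ℚ src tgt)) = 1) := by
  have h := stmt12_general ℤ ℚ src tgt x
  rwa [Polynomial.ringKrullDim_of_isNoetherianRing, ringKrullDim_int,
    ringKrullDim_eq_zero_of_field, zero_add] at h
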